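/- arXiv:1111.5200 — 3 statements merged into one kernel-verified Lean document; each statement's English description precedes it below -/
import Mathlib

section
/- Let q > 1 and β ≥ 1, and let L be a finite set of links with a power assignment P such that L is q^{-α}-feasible. Then for any two distinct links u, v ∈ L, d_{uv} · d_{vu} ≥ q^2 · ℓ_u ℓ_v. -/
open Finset MeasureTheory
open scoped Classical

/-- A wireless link: an ordered sender–receiver pair of points in a metric space. -/
structure Link (X : Type*) where
  sender : X
  receiver : X

variable {X : Type*} [MetricSpace X]

/-- The length `ℓ_v` of a link. -/
noncomputable def linkLen (v : Link X) : ℝ := dist v.sender v.receiver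

/-- The asymmetric distance `d_{wv}` from the sender of `w` to the receiver of `v`. -/
noncomputable def linkDist (w v : Link X) : ℝ := dist w.sender v.receiver

/-- The constant `c_v = β/(1 - β N ℓ_v^α / P_v)`. -/
noncomputable def cConst (α β N : ℝ) (pw : Link X → ℝ) (v : Link X) : ℝ :=
  β / (1 - β * N * linkLen v ^ α / pw v)

/-- The (thresholded) affectance `a_w(v)` of link `w` on link `v`. -/
noncomputable def aff (α β N : ℝ) (pw : Link X → ℝ) (w v : Link X) : ℝ :=
  if w = v then 0
  else min 1 (cConst α β N pw v * (pw w / pw v) * (linkLen v / linkDist w v) ^ α)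

/-- `a_S(v) = Σ_{w ∈ S} a_w(v)`. -/
noncomputable def affIn (α β N : ℝ) (pw : Link X → ℝ) (S : Finset (Link X)) (v : Link X) : ℝ :=
  ∑ w ∈ S, aff α β N pw w v

/-- `a_v(S) = Σ_{w ∈ S} a_v(w)`. -/
noncomputable def affOut (α β N : ℝ) (pw : Link X → ℝ) (v : Link X) (S : Finset (Link X)) : ℝ :=
  ∑ w ∈ S, aff α β N pw v w

/-- Under positive signal-to-noise margin, the constant `c_v` is at least `β`. -/
theorem le_cConst {X : Type*} [MetricSpace X] {α β N : ℝ} {pw : Link X → ℝ} {v : Link X}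
    (hβ : 0 ≤ β) (hN : 0 ≤ N) (hpw : 0 < pw v) (hnoise : β * N * linkLen v ^ α < pw v) :
    β ≤ cConst α β N pw v := by
  have hlen : 0 ≤ linkLen v ^ α := Real.rpow_nonneg dist_nonneg _
  have hratio : 0 ≤ β * N * linkLen v ^ α / pw v := by positivity
  have hratio_lt : β * N * linkLen v ^ α / pw v < 1 := (div_lt_one hpw).2 hnoise
  exact le_div_self hβ (by linarith) (by linarith)

/-- The affectance is nonnegative. -/
theorem aff_nonneg {X : Type*} [MetricSpace X] {α β N : ℝ} {pw : Link X → ℝ} {w v : Link X}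
    (hc : 0 ≤ cConst α β N pw v) (hw : 0 ≤ pw w) (hv : 0 ≤ pw v) :
    0 ≤ aff α β N pw w v := by
  have hrat : 0 ≤ (linkLen v / linkDist w v) ^ α :=
    Real.rpow_nonneg (div_nonneg dist_nonneg dist_nonneg) _
  unfold aff
  split_ifs
  · exact le_rfl
  · exact le_min zero_le_one (by positivity)

/-- An affectance of at most `q ^ (-α)` bounds the power of the interferer. -/
theorem mul_rpow_le_of_aff_le {X : Type*} [MetricSpace X] {α β N q : ℝ} {pw : Link X → ℝ}
    {w v : Link X} (hα : 0 < α) (hq : 1 < q) (hc : 1 ≤ cConst α β N pw v)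
    (hw : 0 < pw w) (hv : 0 < pw v) (hlen : 0 < linkLen v) (hd : 0 < linkDist w v)
    (hne : w ≠ v) (h : aff α β N pw w v ≤ q ^ (-α)) :
    pw w * (q * linkLen v) ^ α ≤ pw v * linkDist w v ^ α := by
  have hq0 : 0 < q := by linarith
  have hlt : q ^ (-α) < 1 := Real.rpow_lt_one_of_one_lt_of_neg hq (by linarith)
  rw [aff, if_neg hne, min_le_iff] at h
  have hle := h.resolve_left hlt.not_ge
  have hle' : pw w / pw v * (linkLen v / linkDist w v) ^ α ≤ q ^ (-α) := by
    refine le_trans ?_ hle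
    rw [mul_assoc]
    exact le_mul_of_one_le_left (by positivity) hc
  rw [Real.div_rpow hlen.le hd.le, Real.rpow_neg hq0.le, div_mul_div_comm,
    div_le_iff₀ (by positivity), inv_mul_eq_div, le_div_iff₀ (by positivity)] at hle'
  rw [Real.mul_rpow hq0.le hlen.le]
  linarith

/-- If `q > 1`, `β ≥ 1` and the finite set `L` of links is
`q^{-α}`-feasible under the power assignment `pw`, then any two distinct links
`u, v ∈ L` satisfy `d_{uv} · d_{vu} ≥ q² ℓ_u ℓ_v`. -/
theorem stmt_3 {X : Type*} [MetricSpace X] (α β N q : ℝ) (pw : Link X → ℝ)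
    (L : Finset (Link X))
    (hα : 0 < α) (hq : 1 < q) (hβ : 1 ≤ β) (hN : 0 ≤ N)
    (hlen : ∀ v ∈ L, 0 < linkLen v)
    (hpw : ∀ v ∈ L, 0 < pw v)
    (hnoise : ∀ v ∈ L, β * N * linkLen v ^ α < pw v)
    (hdd : ∀ v ∈ L, ∀ w ∈ L, w ≠ v → 0 < linkDist w v)
    (hfeas : ∀ v ∈ L, affIn α β N pw L v ≤ q ^ (-α)) :
    ∀ u ∈ L, ∀ v ∈ L, u ≠ v →
      q ^ 2 * (linkLen u * linkLen v) ≤ linkDist u v * linkDist v u := by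
  intro u hu v hv huv
  have hβ0 : 0 ≤ β := by linarith
  have hc : ∀ x ∈ L, 1 ≤ cConst α β N pw x := fun x hx =>
    hβ.trans (le_cConst hβ0 hN (hpw x hx) (hnoise x hx))
  have hpair : ∀ w ∈ L, ∀ x ∈ L, w ≠ x →
      pw w * (q * linkLen x) ^ α ≤ pw x * linkDist w x ^ α := by
    intro w hw x hx hne
    refine mul_rpow_le_of_aff_le hα hq (hc x hx) (hpw w hw) (hpw x hx) (hlen x hx)
      (hdd x hx w hw hne) hne (le_trans ?_ (hfeas x hx))
    exact Finset.single_le_sum (f := fun y => aff α β N pw y x)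
      (fun y hy => aff_nonneg (zero_le_one.trans (hc x hx)) (hpw y hy).le (hpw x hx).le) hw
  have huv_le := hpair u hu v hv huv
  have hvu_le := hpair v hv u hu huv.symm
  have hpu := hpw u hu
  have hpv := hpw v hv
  have hlu := hlen u hu
  have hlv := hlen v hv
  have hduv := hdd v hv u hu huv
  have hdvu := hdd u hu v hv huv.symm
  have hq0 : 0 < q := by linarith
  have hprod := mul_le_mul huv_le hvu_le (by positivity) (by positivity)
  rw [mul_mul_mul_comm, mul_mul_mul_comm (pw v), mul_comm (pw v) (pw u),
    mul_le_mul_iff_right₀ (mul_pos hpu hpv), ← Real.mul_rpow (by positivity) (by positivity),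
    ← Real.mul_rpow hduv.le hdvu.le,
    Real.rpow_le_rpow_iff (by positivity) (by positivity) hα] at hprod
  linarith
end

section
/- Let u, v, x be three pairwise distinct links equipped with a power assignment P that is non-decreasing and sub-linear on {u, v, x}. Suppose ℓ_u ≤ ℓ_v, suppose d_{xv} ≤ 3 · d_{xu}, and suppose c_v (P_x/P_v)(ℓ_v/d_{xv})^α ≤ 1 (so that a_x(v) equals this quantity). Then a_x(u) ≤ 3^α · a_x(v). -/
open Finset MeasureTheory
open scoped Classical

variable {X : Type*} [MetricSpace X]

/-- The ratio `ℓ^α / P` of a link determines both the noise constant and, up to the factor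
`P_w / d_{wv}^α`, the unthresholded affectance. -/
lemma unthresholded_aff_eq (α β N : ℝ) (pw : Link X → ℝ) (w v : Link X) :
    cConst α β N pw v * (pw w / pw v) * (linkLen v / linkDist w v) ^ α =
      β / (1 - β * N * (linkLen v ^ α / pw v)) * (linkLen v ^ α / pw v) *
        (pw w / linkDist w v ^ α) := by
  have h : (linkLen v / linkDist w v) ^ α = linkLen v ^ α / linkDist w v ^ α :=
    Real.div_rpow dist_nonneg dist_nonneg α
  rw [cConst, h]
  ring

/-- Let `u, v, x` be pairwise distinct links with a non-decreasing,
sub-linear power assignment on `{u, v, x}`. If `ℓ_u ≤ ℓ_v`, `d_{xv} ≤ 3 d_{xu}` and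
`c_v (P_x/P_v)(ℓ_v/d_{xv})^α ≤ 1` (so `a_x(v)` equals this quantity), then
`a_x(u) ≤ 3^α · a_x(v)`. -/
theorem stmt_5 {X : Type*} [MetricSpace X] (α β N : ℝ) (pw : Link X → ℝ)
    (u v x : Link X)
    (hα : 0 < α) (hβ : 0 < β) (hN : 0 ≤ N)
    (huv : u ≠ v) (hux : u ≠ x) (hvx : v ≠ x)
    (hlen : ∀ y ∈ ({u, v, x} : Set (Link X)), 0 < linkLen y)
    (hpw : ∀ y ∈ ({u, v, x} : Set (Link X)), 0 < pw y)
    (hnoise : ∀ y ∈ ({u, v, x} : Set (Link X)), β * N * linkLen y ^ α < pw y)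
    (hdd : ∀ y ∈ ({u, v, x} : Set (Link X)), ∀ z ∈ ({u, v, x} : Set (Link X)),
      z ≠ y → 0 < linkDist z y)
    (hmono : ∀ a ∈ ({u, v, x} : Set (Link X)), ∀ b ∈ ({u, v, x} : Set (Link X)),
      linkLen b ≤ linkLen a → pw b ≤ pw a)
    (hsub : ∀ a ∈ ({u, v, x} : Set (Link X)), ∀ b ∈ ({u, v, x} : Set (Link X)),
      linkLen b ≤ linkLen a → pw a / linkLen a ^ α ≤ pw b / linkLen b ^ α)
    (hlu : linkLen u ≤ linkLen v)
    (hd3 : linkDist x v ≤ 3 * linkDist x u)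
    (hsmall : cConst α β N pw v * (pw x / pw v) * (linkLen v / linkDist x v) ^ α ≤ 1) :
    aff α β N pw x u ≤ 3 ^ α * aff α β N pw x v := by
  have hu : u ∈ ({u, v, x} : Set (Link X)) := by simp
  have hv : v ∈ ({u, v, x} : Set (Link X)) := by simp
  have hx : x ∈ ({u, v, x} : Set (Link X)) := by simp
  have hPu := hpw u hu
  have hPv := hpw v hv
  have hPx := hpw x hx
  have hLu : 0 < linkLen u ^ α := Real.rpow_pos_of_pos (hlen u hu) α
  have hLv : 0 < linkLen v ^ α := Real.rpow_pos_of_pos (hlen v hv) α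
  have hdu := hdd u hu x hx hux.symm
  have hdv := hdd v hv x hx hvx.symm
  have hratio : linkLen u ^ α / pw u ≤ linkLen v ^ α / pw v := by
    have h := hsub v hv u hu hlu
    rw [div_le_div_iff₀ hLv hLu] at h
    rw [div_le_div_iff₀ hPu hPv]
    linarith
  have hden : 0 < 1 - β * N * (linkLen v ^ α / pw v) := by
    rw [← mul_div_assoc, sub_pos, div_lt_one hPv]
    exact hnoise v hv
  have hdist : linkDist x v ^ α ≤ 3 ^ α * linkDist x u ^ α := by
    rw [← Real.mul_rpow (by norm_num) hdu.le]
    exact Real.rpow_le_rpow hdv.le hd3 hα.le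
  have hDu : 0 < linkDist x u ^ α := Real.rpow_pos_of_pos hdu α
  have hDv : 0 < linkDist x v ^ α := Real.rpow_pos_of_pos hdv α
  have hgain : pw x / linkDist x u ^ α ≤ 3 ^ α * (pw x / linkDist x v ^ α) := by
    rw [← mul_div_assoc, div_le_div_iff₀ hDu hDv]
    nlinarith [mul_le_mul_of_nonneg_left hdist hPx.le]
  rw [aff, aff, if_neg hux.symm, if_neg hvx.symm, min_eq_right hsmall]
  refine (min_le_right _ _).trans ?_
  rw [unthresholded_aff_eq, unthresholded_aff_eq, mul_left_comm]
  have hconst : β / (1 - β * N * (linkLen u ^ α / pw u)) ≤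
      β / (1 - β * N * (linkLen v ^ α / pw v)) := by
    gcongr
  gcongr
end

section
/- For all constants c₁ ≥ 1 and c₂ ≥ c₃ > 0 there exists a constant c > 0 depending only on α, c₁, c₂, c₃ with the following property. In the variable-QoS setting, let L' ∪ {u} be a finite set of links such that c₃ ≤ c_v ≤ c₂ for every link v ∈ L' ∪ {u} and the power assignment is nearly uniform on L' ∪ {u}, i.e., P_v ≤ c₁ P_w for all links v, w ∈ L' ∪ {u}. Let γ > 0 and suppose L' is γ-anti-feasible. Then a_u(L') ≤ c · max(1, γ). -/
open Finset MeasureTheory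
open scoped Classical

variable {X : Type*} [MetricSpace X]

/-- In the variable-QoS setting, the constant `c_v = β_v/(1 - β_v N_v ℓ_v^α / P_v)`. -/
noncomputable def cConstQ (α : ℝ) (β N pw : Link X → ℝ) (v : Link X) : ℝ :=
  β v / (1 - β v * N v * linkLen v ^ α / pw v)

/-- The (thresholded) affectance `a_w(v)` of link `w` on link `v` (variable QoS). -/
noncomputable def affQ (α : ℝ) (β N pw : Link X → ℝ) (w v : Link X) : ℝ :=
  if w = v then 0
  else min 1 (cConstQ α β N pw v * (pw w / pw v) * (linkLen v / linkDist w v) ^ α)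

/-- `a_S(v) = Σ_{w ∈ S} a_w(v)` (variable QoS). -/
noncomputable def affInQ (α : ℝ) (β N pw : Link X → ℝ) (S : Finset (Link X)) (v : Link X) : ℝ :=
  ∑ w ∈ S, affQ α β N pw w v

/-- `a_v(S) = Σ_{w ∈ S} a_v(w)` (variable QoS). -/
noncomputable def affOutQ (α : ℝ) (β N pw : Link X → ℝ) (v : Link X) (S : Finset (Link X)) : ℝ :=
  ∑ w ∈ S, affQ α β N pw v w

/-- Scaling one argument of a minimum with `1` by a factor at least `1`. -/
lemma min_one_le_mul_min_one {K x y : ℝ} (hK : 1 ≤ K) (h : x ≤ K * y) :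
    min 1 x ≤ K * min 1 y := by
  rw [mul_min_of_nonneg _ _ (by linarith)]
  exact min_le_min (by linarith) h

lemma affQ_le_one (α : ℝ) (β N pw : Link X → ℝ) (w v : Link X) : affQ α β N pw w v ≤ 1 := by
  unfold affQ
  split_ifs
  · exact zero_le_one
  · exact min_le_left _ _

lemma affQ_nonneg {α : ℝ} {β N pw : Link X → ℝ} {w v : Link X}
    (hc : 0 ≤ cConstQ α β N pw v) (hw : 0 ≤ pw w) (hv : 0 ≤ pw v) :
    0 ≤ affQ α β N pw w v := by
  have hl : 0 ≤ linkLen v := dist_nonneg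
  have hd : 0 ≤ linkDist w v := dist_nonneg
  unfold affQ
  split_ifs
  · exact le_rfl
  · positivity

/-- If `d_{vw} ≤ 3 d_{uw}` then the affectance of `u` on `w` is controlled by that of `v`. -/
lemma affQ_le_mul_of_linkDist_le {α c₁ K : ℝ} {β N pw : Link X → ℝ} {u v w : Link X}
    (hα : 0 < α) (hK : 1 ≤ K) (hcK : c₁ * 3 ^ α ≤ K) (hvw : v ≠ w)
    (hc : 0 ≤ cConstQ α β N pw w) (hc₁ : 0 ≤ c₁) (hv : 0 < pw v)
    (hw : 0 < pw w) (huv : pw u ≤ c₁ * pw v) (hd : 0 < linkDist v w)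
    (h : linkDist v w ≤ 3 * linkDist u w) :
    affQ α β N pw u w ≤ K * affQ α β N pw v w := by
  have hl : 0 ≤ linkLen w := dist_nonneg
  by_cases huw : u = w
  · have h0 : affQ α β N pw u w = 0 := by simp [affQ, huw]
    rw [h0]
    exact mul_nonneg (by linarith) (affQ_nonneg hc hv.le hw.le)
  rw [affQ, affQ, if_neg huw, if_neg hvw]
  apply min_one_le_mul_min_one hK
  have hdu : 0 < linkDist u w := by linarith
  have hratio : (linkLen w / linkDist u w) ^ α ≤ 3 ^ α * (linkLen w / linkDist v w) ^ α := by
    rw [← Real.mul_rpow (by norm_num) (by positivity)]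
    apply Real.rpow_le_rpow (by positivity) _ hα.le
    rw [← mul_div_assoc, div_le_div_iff₀ hdu hd]
    nlinarith
  have hpow : pw u / pw w ≤ c₁ * (pw v / pw w) := by
    rw [← mul_div_assoc]
    gcongr
  calc cConstQ α β N pw w * (pw u / pw w) * (linkLen w / linkDist u w) ^ α
      ≤ cConstQ α β N pw w * (c₁ * (pw v / pw w)) * (linkLen w / linkDist u w) ^ α := by gcongr
    _ ≤ cConstQ α β N pw w * (c₁ * (pw v / pw w)) *
          (3 ^ α * (linkLen w / linkDist v w) ^ α) := by gcongr
    _ = (c₁ * 3 ^ α) *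
          (cConstQ α β N pw w * (pw v / pw w) * (linkLen w / linkDist v w) ^ α) := by ring
    _ ≤ _ := by gcongr

/-- If `d_{vw} ≤ 3 ℓ_w` then the affectance of `v` on `w` is bounded below. -/
lemma one_le_mul_affQ_of_linkDist_le {α c₁ c₃ K : ℝ} {β N pw : Link X → ℝ} {v w : Link X}
    (hα : 0 < α) (hc₃ : 0 < c₃) (hK : 1 ≤ K) (hcK : c₁ * 3 ^ α / c₃ ≤ K) (hvw : v ≠ w)
    (hc : c₃ ≤ cConstQ α β N pw w) (hv : 0 < pw v) (hw : 0 < pw w)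
    (hwv : pw w ≤ c₁ * pw v) (hd : 0 < linkDist v w)
    (h : linkDist v w ≤ 3 * linkLen w) :
    1 ≤ K * affQ α β N pw v w := by
  have hl : 0 < linkLen w := by linarith
  rw [affQ, if_neg hvw]
  refine (min_self (1 : ℝ)).symm.le.trans (min_one_le_mul_min_one hK ?_)
  have hratio : 1 ≤ 3 ^ α * (linkLen w / linkDist v w) ^ α := by
    rw [← Real.mul_rpow (by norm_num) (by positivity)]
    apply Real.one_le_rpow _ hα.le
    rw [← mul_div_assoc, one_le_div hd]
    exact h
  have hpow : 1 ≤ c₁ * (pw v / pw w) := by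
    rw [← mul_div_assoc, one_le_div hw]
    exact hwv
  have hcr : 1 ≤ cConstQ α β N pw w / c₃ := (one_le_div hc₃).2 hc
  have hc0 : 0 < cConstQ α β N pw w := hc₃.trans_le hc
  calc (1 : ℝ) ≤ (cConstQ α β N pw w / c₃) * (c₁ * (pw v / pw w)) *
          (3 ^ α * (linkLen w / linkDist v w) ^ α) :=
        one_le_mul_of_one_le_of_one_le (one_le_mul_of_one_le_of_one_le hcr hpow) hratio
    _ = (c₁ * 3 ^ α / c₃) *
          (cConstQ α β N pw w * (pw v / pw w) * (linkLen w / linkDist v w) ^ α) := by ring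
    _ ≤ _ := by gcongr

/-- Transfer of an out-affectance bound from a member `v` of `S` to another link `u`. -/
lemma affOutQ_le_of_forall_le_mul {α K γ : ℝ} {β N pw : Link X → ℝ} {S : Finset (Link X)}
    {u v : Link X} (hv : v ∈ S) (hK : 0 ≤ K) (hγ : affOutQ α β N pw v S ≤ γ)
    (h : ∀ w ∈ S, w ≠ v → affQ α β N pw u w ≤ K * affQ α β N pw v w) :
    affOutQ α β N pw u S ≤ 1 + K * γ := by
  have hvv : affQ α β N pw v v = 0 := by simp [affQ]
  unfold affOutQ at hγ ⊢
  rw [← Finset.add_sum_erase _ _ hv] at hγ ⊢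
  rw [hvv, zero_add] at hγ
  refine add_le_add (affQ_le_one ..) ?_
  calc ∑ w ∈ S.erase v, affQ α β N pw u w
      ≤ ∑ w ∈ S.erase v, K * affQ α β N pw v w :=
        Finset.sum_le_sum fun w hw => h w (Finset.mem_of_mem_erase hw) (Finset.ne_of_mem_erase hw)
    _ = K * ∑ w ∈ S.erase v, affQ α β N pw v w := (Finset.mul_sum ..).symm
    _ ≤ K * γ := by gcongr

/-- For all `c₁ ≥ 1` and `c₂ ≥ c₃ > 0` there is `c > 0` depending only
on `α, c₁, c₂, c₃` such that, in the variable-QoS setting with `c₃ ≤ c_v ≤ c₂` on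
`L' ∪ {u}` and a nearly uniform power assignment (`P_v ≤ c₁ P_w` on `L' ∪ {u}`), if `L'`
is `γ`-anti-feasible then `a_u(L') ≤ c · max 1 γ`. -/
theorem stmt_12 (α : ℝ) (hα : 0 < α) (c₁ c₂ c₃ : ℝ)
    (hc₁ : 1 ≤ c₁) (hc₃ : 0 < c₃) (hc₂ : c₃ ≤ c₂) :
    ∃ c : ℝ, 0 < c ∧
      ∀ (X : Type*) [MetricSpace X] (β N pw : Link X → ℝ)
        (L' : Finset (Link X)) (u : Link X) (γ : ℝ),
        (∀ v ∈ insert u (↑L' : Set (Link X)), 0 < β v) →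
        (∀ v ∈ insert u (↑L' : Set (Link X)), 0 ≤ N v) →
        (∀ v ∈ insert u (↑L' : Set (Link X)), 0 < linkLen v) →
        (∀ v ∈ insert u (↑L' : Set (Link X)), 0 < pw v) →
        (∀ v ∈ insert u (↑L' : Set (Link X)), β v * N v * linkLen v ^ α < pw v) →
        (∀ v ∈ insert u (↑L' : Set (Link X)), ∀ w ∈ insert u (↑L' : Set (Link X)),
          w ≠ v → 0 < linkDist w v) →
        (∀ v ∈ insert u (↑L' : Set (Link X)),
          c₃ ≤ cConstQ α β N pw v ∧ cConstQ α β N pw v ≤ c₂) →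
        (∀ v ∈ insert u (↑L' : Set (Link X)), ∀ w ∈ insert u (↑L' : Set (Link X)),
          pw v ≤ c₁ * pw w) →
        0 < γ →
        (∀ v ∈ L', affOutQ α β N pw v L' ≤ γ) →
        affOutQ α β N pw u L' ≤ c * max 1 γ := by
  have h3 : (0 : ℝ) < 3 ^ α := by positivity
  have hc₁0 : 0 < c₁ := by linarith
  set K : ℝ := 1 + c₁ * 3 ^ α + c₁ * 3 ^ α / c₃
  have hA : 0 < c₁ * 3 ^ α := by positivity
  have hB : 0 < c₁ * 3 ^ α / c₃ := by positivity
  have hK : 1 ≤ K := by linarith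
  refine ⟨2 * (1 + K), by linarith, ?_⟩
  intro X _ β N pw L' u γ _ _ _ hpw _ hdist hc hnear hγ hanti
  have hmem : ∀ v ∈ L', v ∈ insert u (↑L' : Set (Link X)) := fun v hv =>
    Set.mem_insert_of_mem _ hv
  have humem : u ∈ insert u (↑L' : Set (Link X)) := Set.mem_insert _ _
  have hsub : ∀ S ⊆ L', ∀ v ∈ S, affOutQ α β N pw v S ≤ γ := fun S hS v hv =>
    (Finset.sum_le_sum_of_subset_of_nonneg hS fun w hw _ =>
      affQ_nonneg (hc₃.le.trans (hc w (hmem w hw)).1) (hpw v (hmem v (hS hv))).le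
        (hpw w (hmem w hw)).le).trans (hanti v (hS hv))
  have hKγ : 0 ≤ K * γ := by positivity
  -- Links longer than their distance from `u`: compare with the shortest one.
  have hlong : affOutQ α β N pw u (L'.filter fun w => linkDist u w < linkLen w) ≤ 1 + K * γ := by
    set S := L'.filter fun w => linkDist u w < linkLen w
    have hSL : S ⊆ L' := Finset.filter_subset _ _
    rcases S.eq_empty_or_nonempty with he | hne
    · rw [he]
      simp only [affOutQ, Finset.sum_empty]
      linarith
    obtain ⟨v, hv, hmin⟩ := S.exists_min_image linkLen hne
    refine affOutQ_le_of_forall_le_mul hv (by linarith) (hsub S hSL v hv) fun w hw hwv => ?_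
    have hvm := hmem v (hSL hv)
    have hwm := hmem w (hSL hw)
    refine (affQ_le_one ..).trans (one_le_mul_affQ_of_linkDist_le hα hc₃ hK (by linarith) hwv.symm
      (hc w hwm).1 (hpw v hvm) (hpw w hwm) (hnear w hwm v hvm) (hdist w hwm v hvm hwv.symm) ?_)
    have hlv := (Finset.mem_filter.1 hv).2
    have hlw := (Finset.mem_filter.1 hw).2
    have hm := hmin w hw
    simp only [linkDist, linkLen] at hlv hlw hm ⊢
    have t₁ := dist_triangle4 v.sender v.receiver u.sender w.receiver
    rw [dist_comm v.receiver u.sender] at t₁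
    linarith
  -- The remaining links: compare with the one whose sender is nearest to that of `u`.
  have hshort :
      affOutQ α β N pw u (L'.filter fun w => ¬ linkDist u w < linkLen w) ≤ 1 + K * γ := by
    set S := L'.filter fun w => ¬ linkDist u w < linkLen w
    have hSL : S ⊆ L' := Finset.filter_subset _ _
    rcases S.eq_empty_or_nonempty with he | hne
    · rw [he]
      simp only [affOutQ, Finset.sum_empty]
      linarith
    obtain ⟨v, hv, hmin⟩ := S.exists_min_image (fun w => dist u.sender w.sender) hne
    refine affOutQ_le_of_forall_le_mul hv (by linarith) (hsub S hSL v hv) fun w hw hwv => ?_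
    have hvm := hmem v (hSL hv)
    have hwm := hmem w (hSL hw)
    refine affQ_le_mul_of_linkDist_le hα hK (by linarith) hwv.symm
      (hc₃.le.trans (hc w hwm).1) hc₁0.le (hpw v hvm) (hpw w hwm)
      (hnear u humem v hvm) (hdist w hwm v hvm hwv.symm) ?_
    have hlw := not_lt.1 (Finset.mem_filter.1 hw).2
    have hm := hmin w hw
    simp only [linkDist, linkLen] at hlw hm ⊢
    have t₁ := dist_triangle v.sender u.sender w.receiver
    have t₂ := dist_triangle u.sender w.receiver w.sender
    rw [dist_comm v.sender u.sender] at t₁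
    rw [dist_comm w.receiver w.sender] at t₂
    linarith
  have hsplit : affOutQ α β N pw u L' =
      affOutQ α β N pw u (L'.filter fun w => linkDist u w < linkLen w) +
      affOutQ α β N pw u (L'.filter fun w => ¬ linkDist u w < linkLen w) :=
    (Finset.sum_filter_add_sum_filter_not ..).symm
  have h1 : 1 ≤ max 1 γ := le_max_left _ _
  have h2 : K * γ ≤ K * max 1 γ := by
    gcongr
    exact le_max_right _ _
  linarith
end
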